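/- Let A and B be bounded self-adjoint operators on a complex Hilbert space H. For m ≥ 1 define F_m(t) = (1/(2π)^m) · (D^{m−1}G_m)′(t), where G_m(s) = s^{2m−1} ∫_{‖ω‖≤1, ω∈ℝ^{2m}} cos(sω₁A/√m)·cos(sω₂B/√m)⋯cos(sω_{2m−1}A/√m)·cos(sω_{2m}B/√m) · (1−‖ω‖²)^{−1/2} dω. Then F_m(t) converges in operator norm to cos(t√(A²+B²)) as m → ∞, uniformly for t in compact subsets of (0,∞); that is, for every 0 < a ≤ b, sup_{t∈[a,b]} ‖F_m(t) − cos(t√(A²+B²))‖ → 0 as m → ∞. -/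

import Mathlib

open MeasureTheory Real Filter

/-- The operator `(Df)(t) = f'(t)/t` for functions with values in a real normed space. -/
noncomputable def Dop {F : Type*} [NormedAddCommGroup F] [NormedSpace ℝ F]
    (f : ℝ → F) : ℝ → F := fun t => t⁻¹ • deriv f t

/-- `cos (s • T)` defined by its norm-convergent power series
`∑ (-1)^k s^(2k) T^(2k) / (2k)!`. -/
noncomputable def cosOp {H : Type*} [NormedAddCommGroup H] [InnerProductSpace ℂ H]
    (s : ℝ) (T : H →L[ℂ] H) : H →L[ℂ] H :=
  ∑' k : ℕ, (((-1:ℝ)^k * s^(2*k)) / (Nat.factorial (2*k) : ℝ)) • T^(2*k)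

section
open PowerSeries Finset
variable {R : Type*} [NormedRing R] [NormedAlgebra ℝ R]

theorem coeff_prod_ofFn {R : Type*} [Semiring R] {n : ℕ} (φ : Fin n → R⟦X⟧) (N : ℕ) :
    coeff N (List.ofFn φ).prod =
      ∑ k ∈ Nat.antidiagonalTuple n N, (List.ofFn fun i => coeff (k i) (φ i)).prod := by
  induction n generalizing N with
  | zero => cases N <;> simp [coeff_one]
  | succ n ih =>
    have h (f : (Fin (n + 1) → ℕ) → R) : ∑ k ∈ Nat.antidiagonalTuple (n + 1) N, f k =
        ∑ p ∈ antidiagonal N, ∑ k ∈ Nat.antidiagonalTuple n p.2, f (Fin.cons p.1 k) := by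
      rw [Finset.sum_sigma']
      refine Finset.sum_bij' (fun k _ => ⟨(k 0, ∑ i : Fin n, k i.succ), Fin.tail k⟩)
        (fun s _ => Fin.cons s.1.1 s.2) ?_ ?_ ?_ ?_ ?_
      · intro k hk
        rw [Nat.mem_antidiagonalTuple, Fin.sum_univ_succ] at hk
        simp [Nat.mem_antidiagonalTuple, hk, Fin.tail]
      · rintro ⟨⟨a, b⟩, k⟩ hk
        simp only [mem_sigma, HasAntidiagonal.mem_antidiagonal, Nat.mem_antidiagonalTuple] at hk
        simp [Nat.mem_antidiagonalTuple, Fin.sum_univ_succ, hk]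
      · intro k hk
        simp
      · rintro ⟨⟨a, b⟩, k⟩ hk
        simp only [mem_sigma, HasAntidiagonal.mem_antidiagonal, Nat.mem_antidiagonalTuple] at hk
        simp [hk.2]
      · intro k hk
        simp
    rw [h]
    simp [List.ofFn_succ, coeff_mul, ih, Finset.mul_sum]

theorem prod_ofFn_smul {S A : Type*} [CommSemiring S] [Semiring A] [Algebra S A] {n : ℕ}
    (r : Fin n → S) (x : Fin n → A) :
    (List.ofFn fun i => r i • x i).prod = (∏ i, r i) • (List.ofFn x).prod := by
  induction n with
  | zero => simp
  | succ n ih => simp [List.ofFn_succ, Fin.prod_univ_succ, ih, smul_smul, mul_comm]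

theorem prod_ofFn_alternate {M : Type*} [Monoid M] (a b : M) (m : ℕ) :
    (List.ofFn fun i : Fin (2 * m) => if (i : ℕ) % 2 = 0 then a else b).prod = (a * b) ^ m := by
  rw [List.ofFn_mul']
  simp [List.prod_flatten, List.ofFn_succ]

/-- The power series `∑ aⁿ xⁿ zⁿ / n!`. -/
noncomputable def expSeries (x : R) (a : ℝ) : R⟦X⟧ :=
  PowerSeries.mk fun n => (a ^ n / n.factorial) • x ^ n

/-- The coefficients of `φ` are dominated by those of `exp (c z)`. -/
def ExpBounded (φ : R⟦X⟧) (c : ℝ) : Prop :=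
  ∀ n, ‖coeff n φ‖ ≤ c ^ n / n.factorial

theorem add_pow_div_factorial (a b : ℝ) (n : ℕ) :
    ∑ p ∈ antidiagonal n, a ^ p.1 / p.1.factorial * (b ^ p.2 / p.2.factorial) =
      (a + b) ^ n / n.factorial := by
  rw [(Commute.all a b).add_pow', Finset.sum_div]
  refine Finset.sum_congr rfl fun p hp => ?_
  rw [Finset.HasAntidiagonal.mem_antidiagonal] at hp
  subst hp
  have h := Nat.add_choose_mul_factorial_mul_factorial p.1 p.2
  have h' : ((p.1 + p.2).choose p.1 : ℝ) * p.1.factorial * p.2.factorial =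
    (p.1 + p.2).factorial := by rw [Nat.choose_symm_add]; exact_mod_cast h
  rw [nsmul_eq_mul, ← h']
  have := Nat.choose_pos (Nat.le_add_right p.1 p.2)
  field_simp

theorem ExpBounded.mul {R : Type*} [NormedRing R] {φ ψ : R⟦X⟧} {a b : ℝ}
    (hφ : ExpBounded φ a) (hψ : ExpBounded ψ b) :
    ExpBounded (φ * ψ) (a + b) := by
  intro n
  rw [coeff_mul, ← add_pow_div_factorial]
  refine norm_sum_le_of_le _ fun p _ => (norm_mul_le _ _).trans ?_
  exact mul_le_mul (hφ _) (hψ _) (norm_nonneg _) ((norm_nonneg _).trans (hφ _))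

theorem expBounded_one {R : Type*} [NormedRing R] [NormOneClass R] : ExpBounded (1 : R⟦X⟧) 0 := by
  intro n
  rcases n with _ | n <;> simp [coeff_one]

theorem ExpBounded.prod_ofFn {R : Type*} [NormedRing R] [NormOneClass R]
    {n : ℕ} {φ : Fin n → R⟦X⟧} {c : ℝ}
    (h : ∀ i, ExpBounded (φ i) c) : ExpBounded (List.ofFn φ).prod (n * c) := by
  induction n with
  | zero => simpa using expBounded_one
  | succ n ih =>
    rw [List.ofFn_succ, List.prod_cons]
    convert (h 0).mul (ih fun i => h i.succ) using 1
    push_cast; ring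

theorem ExpBounded.pow {R : Type*} [NormedRing R] [NormOneClass R] {φ : R⟦X⟧}
    {c : ℝ} (h : ExpBounded φ c) (n : ℕ) :
    ExpBounded (φ ^ n) (n * c) := by
  simpa using ExpBounded.prod_ofFn (φ := fun _ : Fin n => φ) fun _ => h

theorem expBounded_expSeries [NormOneClass R] (x : R) {a : ℝ} (ha : 0 ≤ a) :
    ExpBounded (expSeries x a) (a * ‖x‖) := by
  intro n
  rw [expSeries, coeff_mk, norm_smul, Real.norm_of_nonneg (by positivity), mul_pow]
  have := norm_pow_le x n
  calc a ^ n / n.factorial * ‖x ^ n‖ ≤ a ^ n / n.factorial * ‖x‖ ^ n := by gcongr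
    _ = _ := by ring

theorem expSeries_mul (x : R) (a b : ℝ) :
    expSeries x a * expSeries x b = expSeries x (a + b) := by
  ext n
  simp only [expSeries, coeff_mul, coeff_mk]
  rw [← add_pow_div_factorial, Finset.sum_smul]
  refine Finset.sum_congr rfl fun p hp => ?_
  rw [Finset.HasAntidiagonal.mem_antidiagonal] at hp
  rw [smul_mul_smul_comm, ← pow_add, hp]

theorem expSeries_pow (x : R) (a : ℝ) (m : ℕ) :
    expSeries x a ^ m = expSeries x (m * a) := by
  induction m with
  | zero => ext n; rcases n with _ | n <;> simp [expSeries, coeff_one]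
  | succ m ih => rw [pow_succ, ih, expSeries_mul]; push_cast; ring_nf

/-- `φ` is dominated by `κ z² exp (c z)`. -/
def SqExpBounded (φ : R⟦X⟧) (κ c : ℝ) : Prop :=
  ∀ n, ‖coeff n φ‖ ≤ coeff n (PowerSeries.C κ * (PowerSeries.X ^ 2 * expSeries (1:ℝ) c))

theorem norm_coeff_mul_le {R : Type*} [NormedRing R] {φ ψ : R⟦X⟧} {f g : ℝ⟦X⟧}
    (hφ : ∀ n, ‖coeff n φ‖ ≤ coeff n f)
    (hψ : ∀ n, ‖coeff n ψ‖ ≤ coeff n g) (n : ℕ) : ‖coeff n (φ * ψ)‖ ≤ coeff n (f * g) := by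
  rw [coeff_mul, coeff_mul]
  refine norm_sum_le_of_le _ fun p _ => (norm_mul_le _ _).trans ?_
  exact mul_le_mul (hφ _) (hψ _) (norm_nonneg _) ((norm_nonneg _).trans (hφ _))

theorem ExpBounded.le_coeff {R : Type*} [NormedRing R] {φ : R⟦X⟧} {c : ℝ}
    (h : ExpBounded φ c) (n : ℕ) :
    ‖coeff n φ‖ ≤ coeff n (expSeries (1:ℝ) c) := by
  simpa [expSeries] using h n

theorem norm_coeff_pow_sub_pow_le {R : Type*} [NormedRing R] [NormOneClass R]
    {φ ψ : R⟦X⟧} {κ c : ℝ} (hφ : ExpBounded φ c)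
    (hψ : ExpBounded ψ c) (h : SqExpBounded (φ - ψ) κ c) (m : ℕ) :
    SqExpBounded (φ ^ m - ψ ^ m) (m * κ) (m * c) := by
  induction m with
  | zero => intro n; simp
  | succ m ih =>
    intro n
    have e : φ ^ (m + 1) - ψ ^ (m + 1) = φ ^ m * (φ - ψ) + (φ ^ m - ψ ^ m) * ψ := by
      rw [pow_succ, pow_succ]; noncomm_ring
    have h1 := norm_coeff_mul_le (hφ.pow m).le_coeff h n
    have h2 := norm_coeff_mul_le ih hψ.le_coeff n
    rw [e, map_add]
    refine (norm_add_le _ _).trans ((add_le_add h1 h2).trans_eq ?_)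
    rw [← map_add]
    congr 1
    have e2 : expSeries (1:ℝ) ((m + 1 : ℕ) * c) = expSeries 1 (m * c) * expSeries 1 c := by
      rw [expSeries_mul]; push_cast; ring_nf
    rw [e2]
    push_cast
    rw [map_mul, map_mul, map_add, map_one]
    ring

theorem norm_coeff_trotter_sub_le [NormOneClass R] (x y : R) {m : ℕ} (hm : 1 ≤ m) (N : ℕ) :
    ‖coeff N ((expSeries x (1 / m) * expSeries y (1 / m)) ^ m) -
        (1 / N.factorial : ℝ) • (x + y) ^ N‖ ≤
      (1 / m) * (2 * N ^ 2 * ((‖x‖ + ‖y‖) ^ N / N.factorial)) := by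
  have hm0 : (0:ℝ) < m := by exact_mod_cast hm
  set a : ℝ := 1 / m
  have ha : 0 < a := by positivity
  set ρ := ‖x‖ + ‖y‖ with hρ
  have hρ0 : 0 ≤ ρ := by positivity
  set U := expSeries x a * expSeries y a with hU
  set V := expSeries (x + y) a
  have hUb : ExpBounded U (a * ρ) := by
    rw [hρ, mul_add]; exact (expBounded_expSeries x ha.le).mul (expBounded_expSeries y ha.le)
  have hVb : ExpBounded V (a * ρ) := by
    intro n
    refine (expBounded_expSeries (x + y) ha.le n).trans ?_
    have := norm_add_le x y
    gcongr
  have hUV : SqExpBounded (U - V) (2 * (a * ρ) ^ 2) (a * ρ) := by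
    intro n
    rcases n with _ | _ | n
    · simp [U, V, expSeries]
    · have h1 : coeff 1 (U - V) = 0 := by
        simp [U, V, expSeries, coeff_mul, Finset.Nat.antidiagonal_succ, add_comm]
      simp only [zero_add, h1, norm_zero]
      rw [coeff_C_mul, coeff_X_pow_mul']
      simp
    · rw [map_sub]
      refine (norm_sub_le _ _).trans ((add_le_add (hUb _) (hVb _)).trans ?_)
      rw [coeff_C_mul, show n + 1 + 1 = n + 2 from rfl, coeff_X_pow_mul]
      simp only [expSeries, coeff_mk, one_pow, smul_eq_mul, mul_one]
      have h1 : ((a * ρ) ^ (n + 2) / (n + 2).factorial : ℝ) ≤ (a * ρ) ^ (n + 2) / n.factorial := by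
        gcongr; omega
      calc _ = 2 * ((a * ρ) ^ (n + 2) / (n + 2).factorial : ℝ) := by ring
        _ ≤ 2 * ((a * ρ) ^ (n + 2) / n.factorial) := by gcongr
        _ = _ := by ring
  have hV : coeff N (V ^ m) = (1 / N.factorial : ℝ) • (x + y) ^ N := by
    rw [expSeries_pow, expSeries, coeff_mk, mul_one_div_cancel hm0.ne']; simp
  have key := norm_coeff_pow_sub_pow_le hUb hVb hUV m N
  rw [map_sub, hV] at key
  refine key.trans ?_
  rw [coeff_C_mul]
  have e1 : (m:ℝ) * (a * ρ) = ρ := by simp only [a]; field_simp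
  have e2 : (m:ℝ) * (2 * (a * ρ) ^ 2) = a * (2 * ρ ^ 2) := by simp only [a]; field_simp
  rw [e1, e2, mul_assoc]
  refine mul_le_mul_of_nonneg_left ?_ ha.le
  rcases N with _ | _ | n
  · simp
  · simp [coeff_X_pow_mul']; positivity
  · rw [show n + 1 + 1 = n + 2 from rfl, coeff_X_pow_mul]
    simp only [expSeries, coeff_mk, one_pow, smul_eq_mul, mul_one]
    rw [Nat.factorial_succ, Nat.factorial_succ]
    push_cast
    rw [show 2 * ρ ^ 2 * (ρ ^ n / (n.factorial : ℝ)) = 2 * (ρ ^ (n + 2) / n.factorial) by ring,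
      mul_assoc]
    refine mul_le_mul_of_nonneg_left ?_ two_pos.le
    have hf : (0:ℝ) < n.factorial := by positivity
    rw [← mul_div_assoc, div_le_div_iff₀ hf (by positivity)]
    have : 0 ≤ ρ ^ (n + 2) * n.factorial := by positivity
    nlinarith [mul_nonneg this (by positivity : (0:ℝ) ≤ n + 2)]
end

section
open Set

/-- Polar decomposition of the integral of a homogeneous function times a radial weight:
the integral of the function over the unit sphere times a radial integral. -/
theorem integral_homogeneous_mul_fun_norm {E : Type*} [NormedAddCommGroup E] [NormedSpace ℝ E]
    [FiniteDimensional ℝ E] [MeasurableSpace E] [BorelSpace E] [Nontrivial E]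
    (μ : Measure E) [μ.IsAddHaarMeasure] (p : E → ℝ) (d : ℕ)
    (hp : ∀ (r : ℝ) (x : E), p (r • x) = r ^ d * p x) (f : ℝ → ℝ) :
    ∫ x, p x * f ‖x‖ ∂μ = (∫ u : Metric.sphere (0 : E) 1, p u ∂μ.toSphere) *
      ∫ r in Ioi (0 : ℝ), r ^ (Module.finrank ℝ E - 1 + d) * f r := by
  calc
    ∫ x, p x * f ‖x‖ ∂μ
        = ∫ x : ({(0)}ᶜ : Set E), p x.1 * f (‖x.1‖) ∂(μ.comap (↑)) := by
      rw [integral_subtype_comap (measurableSet_singleton _).compl fun x ↦ p x * f (‖x‖),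
        restrict_compl_singleton]
    _ = ∫ x, p x.1 * ((x.2 : ℝ) ^ d * f x.2)
          ∂μ.toSphere.prod (.volumeIoiPow (Module.finrank ℝ E - 1)) := by
      rw [← μ.measurePreserving_homeomorphUnitSphereProd.integral_comp
        (Homeomorph.measurableEmbedding _)]
      refine integral_congr_ae (.of_forall fun x => ?_)
      have hx : ‖x.1‖ ≠ 0 := norm_ne_zero_iff.2 x.2
      have h := hp ‖x.1‖ (‖x.1‖⁻¹ • x.1)
      rw [smul_inv_smul₀ hx] at h
      simp only [homeomorphUnitSphereProd_apply_snd_coe, homeomorphUnitSphereProd_apply_fst_coe]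
      rw [h]; ring
    _ = (∫ u : Metric.sphere (0 : E) 1, p u ∂μ.toSphere) *
          ∫ r : Ioi (0 : ℝ), (r : ℝ) ^ d * f r ∂.volumeIoiPow (Module.finrank ℝ E - 1) :=
      integral_prod_mul (fun u : Metric.sphere (0 : E) 1 => p u)
        (fun r : Ioi (0 : ℝ) => (r : ℝ) ^ d * f r)
    _ = _ := by
      simp only [Measure.volumeIoiPow]
      rw [integral_withDensity_eq_integral_toReal_smul
        (f := fun r : Ioi (0 : ℝ) => ENNReal.ofReal (r.1 ^ (Module.finrank ℝ E - 1)))]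
      · rw [integral_subtype_comap measurableSet_Ioi
          fun a ↦ (ENNReal.ofReal (a ^ (Module.finrank ℝ E - 1))).toReal • (a ^ d * f a)]
        congr 1
        refine setIntegral_congr_fun measurableSet_Ioi fun x hx => ?_
        have : 0 ≤ x ^ (Module.finrank ℝ E - 1) := pow_nonneg (le_of_lt hx) _
        simp only [ENNReal.toReal_ofReal this, smul_eq_mul, pow_add]
        ring
      · fun_prop
      · exact .of_forall fun _ => ENNReal.ofReal_lt_top

theorem integral_pow_mul_exp_neg_sq_Ioi (n : ℕ) :
    ∫ r in Ioi (0 : ℝ), r ^ n * exp (-r ^ 2) = Gamma ((n + 1) / 2) / 2 := by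
  have h := integral_rpow_mul_exp_neg_rpow (p := 2) (q := n) two_pos
    (by have := n.cast_nonneg (α := ℝ); linarith)
  simp only [rpow_natCast, rpow_two] at h
  rw [h]; ring

theorem integral_pow_two_mul_mul_exp_neg_sq (k : ℕ) :
    ∫ x : ℝ, x ^ (2 * k) * exp (-x ^ 2) = Gamma (k + 1 / 2) := by
  have h := integral_comp_abs (f := fun x => x ^ (2 * k) * exp (-x ^ 2))
  simp only [sq_abs, pow_mul] at h
  simp only [pow_mul]
  rw [h]
  simp only [← pow_mul]
  rw [integral_pow_mul_exp_neg_sq_Ioi]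
  push_cast
  rw [show ((2 * (k:ℝ) + 1) / 2) = k + 1 / 2 by ring]
  ring

theorem integral_prod_pow_mul_exp_neg_norm_sq {n : ℕ} (k : Fin n → ℕ) :
    ∫ x : EuclideanSpace ℝ (Fin n), (∏ i, x i ^ (2 * k i)) * exp (-‖x‖ ^ 2) =
      ∏ i, Gamma (k i + 1 / 2) := by
  rw [← (EuclideanSpace.volume_preserving_symm_measurableEquiv_toLp (Fin n)).symm.integral_comp
    (MeasurableEquiv.measurableEmbedding _)]
  simp_rw [← integral_pow_two_mul_mul_exp_neg_sq]
  rw [← integral_fintype_prod_volume_eq_prod]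
  refine integral_congr_ae (.of_forall fun x => ?_)
  simp only [EuclideanSpace.norm_sq_eq, Finset.prod_mul_distrib, ← exp_sum,
    Finset.sum_neg_distrib]
  simp

/-- The radial weight `(1 - r ^ 2) ^ (-1 / 2)`, cut off to `r ≤ 1`. -/
noncomputable def ballWeight (r : ℝ) : ℝ :=
  (Iic (1:ℝ)).indicator (fun r => (1 - r ^ 2) ^ (-(1:ℝ) / 2)) r

theorem integral_beta {a b : ℝ} (ha : 0 < a) (hb : 0 < b) :
    IntegrableOn (fun x : ℝ => x ^ (a - 1) * (1 - x) ^ (b - 1)) (Ioc 0 1) ∧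
    ∫ x in Ioc (0:ℝ) 1, x ^ (a - 1) * (1 - x) ^ (b - 1) = Gamma a * Gamma b / Gamma (a + b) := by
  have hc := Complex.betaIntegral_convergent (u := a) (v := b) (by simpa) (by simpa)
  have he : ∀ x ∈ Ioc (0:ℝ) 1, ((x:ℂ) ^ ((a:ℂ) - 1) * (1 - (x:ℂ)) ^ ((b:ℂ) - 1)) =
      ((x ^ (a - 1) * (1 - x) ^ (b - 1) : ℝ) : ℂ) := by
    intro x hx
    rw [Complex.ofReal_mul, Complex.ofReal_cpow hx.1.le, Complex.ofReal_cpow (by linarith [hx.2])]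
    push_cast; rfl
  rw [intervalIntegrable_iff_integrableOn_Ioc_of_le zero_le_one] at hc
  have hi : IntegrableOn (fun x : ℝ => x ^ (a - 1) * (1 - x) ^ (b - 1)) (Ioc 0 1) := by
    have h2 := Integrable.re (hc.congr_fun he measurableSet_Ioc)
    simpa only [RCLike.re_to_complex, Complex.ofReal_re] using! h2
  refine ⟨hi, ?_⟩
  have := ProbabilityTheory.beta_eq_betaIntegralReal a b ha hb
  rw [ProbabilityTheory.beta] at this
  rw [this, Complex.betaIntegral, intervalIntegral.integral_of_le zero_le_one,
    setIntegral_congr_fun measurableSet_Ioc he, integral_complex_ofReal, Complex.ofReal_re]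

theorem ballWeight_radial (N : ℕ) :
    IntegrableOn (fun r => r ^ (2 * N + 1) * ballWeight r) (Ioi 0) ∧
    ∫ r in Ioi (0:ℝ), r ^ (2 * N + 1) * ballWeight r =
      Gamma (N + 1) * √π / Gamma (N + 1 + 1 / 2) / 2 := by
  obtain ⟨h1, h2⟩ := integral_beta (a := N + 1) (b := 1 / 2) (by positivity) (by positivity)
  set g : ℝ → ℝ := (Iic (1:ℝ)).indicator fun x => x ^ ((N:ℝ) + 1 - 1) * (1 - x) ^ ((1:ℝ) / 2 - 1)
  have hg1 : IntegrableOn g (Ioi 0) := by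
    rw [integrableOn_indicator_iff measurableSet_Iic, Iic_inter_Ioi]
    exact h1
  have hg2 : ∫ x in Ioi 0, g x = Gamma (N + 1) * √π / Gamma (N + 1 + 1 / 2) := by
    rw [setIntegral_indicator measurableSet_Iic, Ioi_inter_Iic, h2, Gamma_one_half_eq]
  have hE : EqOn (fun x : ℝ => (|2| * x ^ ((2:ℝ) - 1)) • g (x ^ (2:ℝ)))
      (fun r => 2 * (r ^ (2 * N + 1) * ballWeight r)) (Ioi 0) := by
    intro x hx
    have hx : 0 < x := hx
    have h1 : x ^ 2 ≤ 1 ↔ x ≤ 1 := by rw [sq_le_one_iff₀ hx.le]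
    simp only [g, ballWeight, indicator, mem_Iic, rpow_two, h1]
    split_ifs
    · rw [add_sub_cancel_right, rpow_natCast]
      norm_num
      ring
    · simp
  have h3 := integral_comp_rpow_Ioi g (p := 2) two_ne_zero
  have h4 := (integrableOn_Ioi_comp_rpow_iff g (p := 2) two_ne_zero).2 hg1
  rw [setIntegral_congr_fun measurableSet_Ioi hE, integral_const_mul, hg2] at h3
  have h5 := h4.congr_fun hE measurableSet_Ioi
  refine ⟨?_, by linarith⟩
  simpa [← mul_assoc] using! h5.const_mul (1 / 2)

theorem integrable_ballWeight_norm {m : ℕ} (hm : 1 ≤ m) :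
    Integrable (fun x : EuclideanSpace ℝ (Fin (2 * m)) => ballWeight ‖x‖) := by
  obtain ⟨q, rfl⟩ : ∃ q, m = q + 1 := ⟨m - 1, by omega⟩
  have : Nontrivial (EuclideanSpace ℝ (Fin (2 * (q + 1)))) := by
    apply Module.nontrivial_of_finrank_pos (R := ℝ); simp
  rw [integrable_fun_norm_addHaar]
  have h := (ballWeight_radial q).1
  simpa [mul_add] using h

theorem integral_prod_pow_mul_ballWeight {m : ℕ} (hm : 1 ≤ m) (k : Fin (2 * m) → ℕ) :
    ∫ x : EuclideanSpace ℝ (Fin (2 * m)), (∏ i, x i ^ (2 * k i)) * ballWeight ‖x‖ =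
      (∏ i, Gamma (k i + 1 / 2)) * √π / Gamma ((∑ i, k i : ℕ) + m + 1 / 2) := by
  obtain ⟨q, rfl⟩ : ∃ q, m = q + 1 := ⟨m - 1, by omega⟩
  have : Nontrivial (EuclideanSpace ℝ (Fin (2 * (q + 1)))) := by
    apply Module.nontrivial_of_finrank_pos (R := ℝ); simp
  have hp : ∀ (r : ℝ) (x : EuclideanSpace ℝ (Fin (2 * (q + 1)))),
      ∏ i, (r • x) i ^ (2 * k i) = r ^ (2 * ∑ i, k i) * ∏ i, x i ^ (2 * k i) := by
    intro r x
    simp [mul_pow, Finset.prod_mul_distrib, Finset.prod_pow_eq_pow_sum, Finset.mul_sum]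
  have h1 := integral_prod_pow_mul_exp_neg_norm_sq k
  rw [integral_homogeneous_mul_fun_norm volume _ _ hp (fun r => exp (-r ^ 2)),
    integral_pow_mul_exp_neg_sq_Ioi] at h1
  rw [integral_homogeneous_mul_fun_norm volume _ _ hp, ← h1]
  have e : Module.finrank ℝ (EuclideanSpace ℝ (Fin (2 * (q + 1)))) - 1 + 2 * ∑ i, k i =
    2 * (q + ∑ i, k i) + 1 := by simp; omega
  rw [e, (ballWeight_radial _).2]
  push_cast
  rw [show (2 * ((q:ℝ) + ∑ i, (k i : ℝ)) + 1 + 1) / 2 = q + ∑ i, (k i : ℝ) + 1 by ring,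
    show (∑ i, (k i : ℝ)) + (q + 1) + 1 / 2 = q + ∑ i, (k i : ℝ) + 1 + 1 / 2 by ring]
  ring

end

section
open PowerSeries Set

section
variable {R : Type*} [NormedRing R] [NormedAlgebra ℝ R]

theorem ExpBounded.summable {φ : R⟦X⟧} {c : ℝ} (h : ExpBounded φ c) (z : ℝ) :
    Summable fun n => ‖z ^ n • coeff n φ‖ := by
  refine Summable.of_nonneg_of_le (fun _ => norm_nonneg _) (fun n => ?_)
    (Real.summable_pow_div_factorial (|z| * c))
  rw [norm_smul, norm_pow, Real.norm_eq_abs, mul_pow, mul_div_assoc]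
  exact mul_le_mul_of_nonneg_left (h n) (by positivity)

/-- The value of a power series at a real point. -/
noncomputable def seriesValue (z : ℝ) (φ : R⟦X⟧) : R := ∑' n, z ^ n • coeff n φ

theorem seriesValue_mul [CompleteSpace R] {φ ψ : R⟦X⟧} {a b : ℝ} (hφ : ExpBounded φ a)
    (hψ : ExpBounded ψ b) (z : ℝ) :
    seriesValue z (φ * ψ) = seriesValue z φ * seriesValue z ψ := by
  rw [seriesValue, seriesValue, seriesValue,
    tsum_mul_tsum_eq_tsum_sum_antidiagonal_of_summable_norm (hφ.summable z) (hψ.summable z)]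
  refine tsum_congr fun n => ?_
  rw [coeff_mul, Finset.smul_sum]
  refine Finset.sum_congr rfl fun p hp => ?_
  rw [Finset.HasAntidiagonal.mem_antidiagonal] at hp
  rw [smul_mul_smul_comm, ← pow_add, hp]

theorem seriesValue_one (z : ℝ) : seriesValue z (1 : R⟦X⟧) = 1 := by
  rw [seriesValue, tsum_eq_single 0]
  · simp
  · intro n hn; simp [coeff_one, hn]

theorem seriesValue_prod_ofFn [CompleteSpace R] [NormOneClass R] {n : ℕ} {φ : Fin n → R⟦X⟧} {c : ℝ}
    (h : ∀ i, ExpBounded (φ i) c) (z : ℝ) :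
    seriesValue z (List.ofFn φ).prod = (List.ofFn fun i => seriesValue z (φ i)).prod := by
  induction n with
  | zero => simpa using seriesValue_one z
  | succ n ih =>
    rw [List.ofFn_succ, List.prod_cons, List.ofFn_succ, List.prod_cons,
      seriesValue_mul (h 0) (ExpBounded.prod_ofFn fun i => h i.succ), ih fun i => h i.succ]

/-- The power series `∑ (-1)ⁿ cⁿ xⁿ zⁿ / (2n)!`. -/
noncomputable def cosSeries (x : R) (c : ℝ) : R⟦X⟧ :=
  PowerSeries.mk fun n => ((-1) ^ n * c ^ n / (2 * n).factorial) • x ^ n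

theorem expBounded_cosSeries [NormOneClass R] (x : R) {c K : ℝ} (h : |c| * ‖x‖ ≤ K) :
    ExpBounded (cosSeries x c) K := by
  intro n
  rw [cosSeries, coeff_mk, norm_smul]
  simp only [norm_div, norm_mul, norm_pow, norm_neg, norm_one, one_pow, one_mul, Real.norm_eq_abs,
    Nat.abs_cast]
  have h1 := norm_pow_le x n
  have h2 : ((n.factorial : ℕ) : ℝ) ≤ (2 * n).factorial := by
    exact_mod_cast Nat.factorial_le (by omega)
  calc |c| ^ n / (2 * n).factorial * ‖x ^ n‖ ≤ |c| ^ n / n.factorial * ‖x‖ ^ n := by gcongr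
    _ = (|c| * ‖x‖) ^ n / n.factorial := by rw [mul_pow]; ring
    _ ≤ _ := by gcongr

/-- The terms of the expansion of the ordered product of cosines by homogeneous degree. -/
noncomputable def cosProdTerm {m : ℕ} (x : Fin (2 * m) → R) (N : ℕ)
    (ω : EuclideanSpace ℝ (Fin (2 * m))) : R :=
  coeff N (List.ofFn fun i => cosSeries (x i) (ω i ^ 2 / m)).prod

theorem cosProdTerm_eq {m : ℕ} (x : Fin (2 * m) → R) (N : ℕ)
    (ω : EuclideanSpace ℝ (Fin (2 * m))) :
    cosProdTerm x N ω = ∑ k ∈ Finset.Nat.antidiagonalTuple (2 * m) N,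
      (∏ i, ω i ^ (2 * k i)) • (((-1) ^ N / (m:ℝ) ^ N * ∏ i, (1 / (2 * k i).factorial : ℝ)) •
        (List.ofFn fun i => x i ^ k i).prod) := by
  rw [cosProdTerm, coeff_prod_ofFn]
  refine Finset.sum_congr rfl fun k hk => ?_
  rw [Finset.Nat.mem_antidiagonalTuple] at hk
  simp only [cosSeries, coeff_mk]
  rw [prod_ofFn_smul, smul_smul]
  congr 1
  rw [← hk, ← Finset.prod_pow_eq_pow_sum, ← Finset.prod_pow_eq_pow_sum, ← Finset.prod_div_distrib,
    ← Finset.prod_mul_distrib, ← Finset.prod_mul_distrib]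
  refine Finset.prod_congr rfl fun i _ => ?_
  rw [div_pow, ← pow_mul]
  ring

theorem continuous_cosProdTerm {m : ℕ} (x : Fin (2 * m) → R) (N : ℕ) :
    Continuous (cosProdTerm x N) := by
  have : cosProdTerm x N = _ := funext fun ω => cosProdTerm_eq x N ω
  rw [this]
  fun_prop

theorem expBounded_cosSeries_coord [NormOneClass R] {m : ℕ} (hm : 1 ≤ m) (x : R) {K : ℝ}
    (hx : ‖x‖ ≤ K) {ω : EuclideanSpace ℝ (Fin (2 * m))} (hω : ‖ω‖ ≤ 1) (i : Fin (2 * m)) :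
    ExpBounded (cosSeries x (ω i ^ 2 / m)) K := by
  refine expBounded_cosSeries _ (le_trans ?_ hx)
  refine mul_le_of_le_one_left (norm_nonneg _) ?_
  have hm' : (1:ℝ) ≤ m := by exact_mod_cast hm
  have h1 : |ω i| ≤ 1 := (PiLp.norm_apply_le ω i).trans hω
  rw [abs_of_nonneg (by positivity), div_le_one (by positivity)]
  exact ((sq_le_one_iff_abs_le_one _).2 h1).trans hm'

theorem norm_cosProdTerm_le [NormOneClass R] {m : ℕ} (hm : 1 ≤ m) (x : Fin (2 * m) → R) {K : ℝ}
    (hx : ∀ i, ‖x i‖ ≤ K) (N : ℕ) {ω : EuclideanSpace ℝ (Fin (2 * m))} (hω : ‖ω‖ ≤ 1) :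
    ‖cosProdTerm x N ω‖ ≤ ((2 * m : ℕ) * K) ^ N / N.factorial :=
  ExpBounded.prod_ofFn (fun i => expBounded_cosSeries_coord hm _ (hx i) hω i) N
end

theorem ballWeight_nonneg {r : ℝ} (hr : 0 ≤ r) : 0 ≤ ballWeight r := by
  unfold ballWeight
  refine indicator_apply_nonneg fun h => rpow_nonneg ?_ _
  have : r ^ 2 ≤ 1 := pow_le_one₀ hr h
  linarith

theorem ballWeight_of_one_lt {r : ℝ} (hr : 1 < r) : ballWeight r = 0 := by
  simp [ballWeight, hr]

theorem measurable_ballWeight : Measurable ballWeight := by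
  unfold ballWeight
  exact Measurable.indicator (by fun_prop) measurableSet_Iic

theorem norm_ballWeight_smul_le {E F : Type*} [NormedAddCommGroup E] [NormedAddCommGroup F]
    [NormedSpace ℝ F] {f : E → F} {C : ℝ} (hC : ∀ x, ‖x‖ ≤ 1 → ‖f x‖ ≤ C) (x : E) :
    ‖ballWeight ‖x‖ • f x‖ ≤ C * ballWeight ‖x‖ := by
  rw [norm_smul, Real.norm_of_nonneg (ballWeight_nonneg (norm_nonneg _)), mul_comm]
  rcases le_or_gt ‖x‖ 1 with h | h
  · exact mul_le_mul_of_nonneg_right (hC x h) (ballWeight_nonneg (norm_nonneg _))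
  · simp [ballWeight_of_one_lt h]

theorem integrable_ballWeight_smul {F : Type*} [NormedAddCommGroup F]
    [NormedSpace ℝ F] {m : ℕ} (hm : 1 ≤ m) {f : EuclideanSpace ℝ (Fin (2 * m)) → F}
    (hf : Continuous f) {C : ℝ} (hC : ∀ x, ‖x‖ ≤ 1 → ‖f x‖ ≤ C) :
    Integrable fun x => ballWeight ‖x‖ • f x := by
  refine Integrable.mono' ((integrable_ballWeight_norm hm).const_mul C) ?_
    (.of_forall (norm_ballWeight_smul_le hC))
  exact (measurable_ballWeight.comp measurable_norm).aestronglyMeasurable.smul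
    hf.aestronglyMeasurable

theorem Gamma_nat_add_half_eq (k : ℕ) :
    Gamma (k + 1 / 2) = √π * ((2 * k).factorial / (4 ^ k * k.factorial)) := by
  induction k with
  | zero => simp [-one_div, Gamma_one_half_eq]
  | succ k ih =>
    rw [show ((k + 1 : ℕ) : ℝ) + 1 / 2 = (k + 1 / 2) + 1 by push_cast; ring,
      Gamma_add_one (by positivity), ih, show 2 * (k + 1) = 2 * k + 1 + 1 by ring,
      Nat.factorial_succ, Nat.factorial_succ, Nat.factorial_succ]
    push_cast
    field_simp
    ring

theorem Gamma_nat_add_nat_add_half (N m : ℕ) :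
    Gamma (N + m + 1 / 2) =
      Gamma (N + 1 / 2) * (∏ i ∈ Finset.range m, (2 * N + 2 * i + 1 : ℝ)) / 2 ^ m := by
  induction m with
  | zero => simp
  | succ m ih =>
    rw [show (N:ℝ) + (m + 1 : ℕ) + 1 / 2 = (N + m + 1 / 2) + 1 by push_cast; ring,
      Gamma_add_one (by positivity), ih, Finset.prod_range_succ]
    field_simp
    ring

theorem integral_monomial_ballWeight {m : ℕ} (hm : 1 ≤ m) (k : Fin (2 * m) → ℕ) {N : ℕ}
    (hk : ∑ i, k i = N) :
    ∫ x : EuclideanSpace ℝ (Fin (2 * m)), (∏ i, x i ^ (2 * k i)) * ballWeight ‖x‖ =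
      (2 * π) ^ m * N.factorial /
        ((2 * N).factorial * ∏ i ∈ Finset.range m, (2 * N + 2 * i + 1 : ℝ)) *
      ∏ i, ((2 * k i).factorial / (k i).factorial : ℝ) := by
  rw [integral_prod_pow_mul_ballWeight hm, hk, Gamma_nat_add_nat_add_half]
  simp_rw [Gamma_nat_add_half_eq]
  rw [Finset.prod_mul_distrib, Finset.prod_const, Finset.card_univ, Fintype.card_fin, pow_mul,
    sq_sqrt pi_pos.le]
  have h4 : ∏ i, ((2 * k i).factorial / (4 ^ k i * (k i).factorial) : ℝ) =
      (∏ i, ((2 * k i).factorial / (k i).factorial : ℝ)) / 4 ^ N := by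
    rw [← hk, ← Finset.prod_pow_eq_pow_sum, ← Finset.prod_div_distrib]
    refine Finset.prod_congr rfl fun i _ => ?_
    field_simp
  rw [h4]
  have hP : (0:ℝ) < ∏ i ∈ Finset.range m, (2 * N + 2 * i + 1 : ℝ) :=
    Finset.prod_pos fun i _ => by positivity
  have hπ := sqrt_pos.2 pi_pos
  rw [mul_pow]
  field_simp

section
variable {R : Type*} [NormedRing R] [NormedAlgebra ℝ R] [CompleteSpace R]

/-- The factor relating the moments of the weighted unit ball of `ℝ²ᵐ` to Taylor coefficients. -/
noncomputable def momentFactor (m N : ℕ) : ℝ :=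
  (-1) ^ N * ((2 * π) ^ m * N.factorial /
    ((2 * N).factorial * ∏ i ∈ Finset.range m, (2 * N + 2 * i + 1 : ℝ)))

theorem integral_cosProdTerm {m : ℕ} (hm : 1 ≤ m) (x : Fin (2 * m) → R) (N : ℕ) :
    ∫ ω, ballWeight ‖ω‖ • cosProdTerm x N ω =
      momentFactor m N • coeff N (List.ofFn fun i => expSeries (x i) (1 / m)).prod := by
  simp_rw [cosProdTerm_eq, Finset.smul_sum]
  rw [integral_finsetSum]
  · rw [coeff_prod_ofFn, Finset.smul_sum]
    refine Finset.sum_congr rfl fun k hk => ?_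
    rw [Finset.Nat.mem_antidiagonalTuple] at hk
    simp_rw [smul_smul _ _ (_ : R)]
    rw [integral_smul_const]
    simp only [expSeries, coeff_mk]
    rw [prod_ofFn_smul, smul_smul]
    congr 1
    simp_rw [← mul_assoc]
    rw [integral_mul_const, integral_mul_const]
    simp_rw [mul_comm (ballWeight _)]
    rw [integral_monomial_ballWeight hm k hk, momentFactor]
    have e1 : ∏ i, ((1 / (m:ℝ)) ^ k i / (k i).factorial) =
        1 / (m:ℝ) ^ N * (∏ i, ((2 * k i).factorial / (k i).factorial : ℝ)) *
          ∏ i, (1 / (2 * k i).factorial : ℝ) := by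
      rw [← hk, ← one_div_pow, ← Finset.prod_pow_eq_pow_sum, ← Finset.prod_mul_distrib,
        ← Finset.prod_mul_distrib]
      refine Finset.prod_congr rfl fun i _ => ?_
      field_simp
    rw [e1]
    ring
  · intro k _
    refine integrable_ballWeight_smul hm (by fun_prop) (C := 1 * ‖((-1) ^ N / (m:ℝ) ^ N *
      ∏ i, (1 / (2 * k i).factorial : ℝ)) • (List.ofFn fun i => x i ^ k i).prod‖) ?_
    intro ω hω
    rw [norm_smul]
    refine mul_le_mul_of_nonneg_right ?_ (norm_nonneg _)
    rw [norm_prod]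
    refine Finset.prod_le_one (fun _ _ => norm_nonneg _) fun i _ => ?_
    rw [norm_pow]
    exact pow_le_one₀ (norm_nonneg _) ((PiLp.norm_apply_le ω i).trans hω)

theorem integral_prod_seriesValue [NormOneClass R] {m : ℕ} (hm : 1 ≤ m) (x : Fin (2 * m) → R)
    (s : ℝ) :
    ∫ ω in Metric.closedBall (0 : EuclideanSpace ℝ (Fin (2 * m))) 1,
        ((1 - ‖ω‖ ^ 2) ^ (-(1:ℝ) / 2)) •
          (List.ofFn fun i => seriesValue (s ^ 2) (cosSeries (x i) (ω i ^ 2 / m))).prod =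
      ∑' N, (s ^ (2 * N) * momentFactor m N) •
        coeff N (List.ofFn fun i => expSeries (x i) (1 / m)).prod := by
  obtain ⟨K, hK⟩ : ∃ K, ∀ i, ‖x i‖ ≤ K :=
    ⟨∑ i, ‖x i‖, fun i => Finset.single_le_sum (f := fun i => ‖x i‖)
      (fun _ _ => norm_nonneg _) (Finset.mem_univ i)⟩
  rw [← integral_indicator Metric.isClosed_closedBall.measurableSet]
  have h1 : ∀ ω : EuclideanSpace ℝ (Fin (2 * m)),
      (Metric.closedBall (0 : EuclideanSpace ℝ (Fin (2 * m))) 1).indicator (fun ω =>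
        ((1 - ‖ω‖ ^ 2) ^ (-(1:ℝ) / 2)) •
          (List.ofFn fun i => seriesValue (s ^ 2) (cosSeries (x i) (ω i ^ 2 / m))).prod) ω =
      ∑' N, ballWeight ‖ω‖ • (s ^ (2 * N) • cosProdTerm x N ω) := by
    intro ω
    by_cases h : ‖ω‖ ≤ 1
    · rw [indicator_of_mem (by simpa using h), tsum_const_smul'', ballWeight,
        indicator_of_mem (by simpa using h),
        ← seriesValue_prod_ofFn fun i => expBounded_cosSeries_coord hm _ (hK i) h i]
      simp [seriesValue, cosProdTerm, pow_mul]
    · rw [indicator_of_notMem (by simpa using h), ballWeight_of_one_lt (not_le.1 h)]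
      simp
  simp_rw [h1]
  have hb : ∀ (N : ℕ) (ω : EuclideanSpace ℝ (Fin (2 * m))), ‖ω‖ ≤ 1 →
      ‖s ^ (2 * N) • cosProdTerm x N ω‖ ≤ (s ^ 2 * ((2 * m : ℕ) * K)) ^ N / N.factorial := by
    intro N ω hω
    rw [norm_smul, norm_pow, pow_mul, Real.norm_eq_abs, sq_abs, mul_pow, mul_div_assoc]
    exact mul_le_mul_of_nonneg_left (norm_cosProdTerm_le hm x hK N hω) (by positivity)
  have hi : ∀ N, Integrable fun ω => ballWeight ‖ω‖ • (s ^ (2 * N) • cosProdTerm x N ω) :=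
    fun N => integrable_ballWeight_smul hm ((continuous_cosProdTerm x N).const_smul _) (hb N)
  rw [← integral_tsum_of_summable_integral_norm hi]
  · refine tsum_congr fun N => ?_
    simp_rw [smul_comm (ballWeight _)]
    rw [integral_smul, integral_cosProdTerm hm, smul_smul]
  · refine Summable.of_nonneg_of_le (fun _ => integral_nonneg fun _ => norm_nonneg _) (fun N => ?_)
      ((Real.summable_pow_div_factorial (s ^ 2 * ((2 * m : ℕ) * K))).mul_right
        (∫ ω : EuclideanSpace ℝ (Fin (2 * m)), ballWeight ‖ω‖))
    rw [← integral_const_mul]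
    exact integral_mono (hi N).norm ((integrable_ballWeight_norm hm).const_mul _)
      (norm_ballWeight_smul_le (hb N))
end

end

theorem hasDerivAt_tsum_pow_smul {F : Type*} [NormedAddCommGroup F] [NormedSpace ℝ F]
    [CompleteSpace F] {a : ℕ → F} (ha : ∀ r : ℝ, 0 ≤ r → Summable fun N => ‖a N‖ * r ^ N)
    (p : ℕ) {t : ℝ} (ht : 0 < t) :
    HasDerivAt (fun s : ℝ => ∑' N, s ^ (2 * N + p + 1) • a N)
      (∑' N : ℕ, ((2 * N + p + 1 : ℝ) * t ^ (2 * N + p)) • a N) t := by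
  set r := t + 1
  have hr : 0 ≤ r := by positivity
  have hu : Summable fun N => (p + 1) * r ^ p * (‖a N‖ * (3 * r ^ 2) ^ N) :=
    (ha (3 * r ^ 2) (by positivity)).mul_left _
  refine hasDerivAt_tsum_of_isPreconnected (𝕜 := ℝ) (F := F)
    (g := fun N (s : ℝ) => s ^ (2 * N + p + 1) • a N)
    (g' := fun N (s : ℝ) => ((2 * N + p + 1 : ℝ) * s ^ (2 * N + p)) • a N)
    (t := Set.Ioo (-1) r) (y₀ := 0) hu isOpen_Ioo
    isPreconnected_Ioo ?_ ?_ ⟨by norm_num, by positivity⟩ ?_ ⟨by linarith, by simp [r]⟩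
  · intro N y _
    have := (hasDerivAt_pow (2 * N + p + 1) y).smul_const (a N)
    simpa using this
  · intro N y hy
    have hy' : |y| ≤ r := abs_le.2 ⟨by linarith [hy.1], hy.2.le⟩
    rw [norm_smul, norm_mul, norm_pow, Real.norm_eq_abs y, Real.norm_of_nonneg (by positivity)]
    have h3 : (1 + 2 * N : ℝ) ≤ 3 ^ N := by
      have := one_add_mul_le_pow (a := (2:ℝ)) (by norm_num) N
      norm_num at this; linarith
    have h4 : (2 * N + p + 1 : ℝ) ≤ (p + 1) * 3 ^ N := by
      have : (0:ℝ) ≤ p * (2 * N) := by positivity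
      nlinarith [mul_le_mul_of_nonneg_left h3 (by positivity : (0:ℝ) ≤ p + 1)]
    calc (2 * N + p + 1 : ℝ) * |y| ^ (2 * N + p) * ‖a N‖
        ≤ ((p + 1) * 3 ^ N) * r ^ (2 * N + p) * ‖a N‖ := by gcongr
      _ = _ := by rw [pow_add, pow_mul, mul_pow]; ring
  · simp

theorem deriv_iterate_Dop {F : Type*} [NormedAddCommGroup F] [NormedSpace ℝ F]
    [CompleteSpace F] (q : ℕ) {f : ℝ → F} {a : ℕ → F}
    (ha : ∀ r : ℝ, 0 ≤ r → Summable fun N => ‖a N‖ * r ^ N)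
    (hf : ∀ t : ℝ, 0 < t → f t = ∑' N, t ^ (2 * N + 2 * q + 1) • a N) {t : ℝ} (ht : 0 < t) :
    deriv (Dop^[q] f) t = ∑' N : ℕ, (t ^ (2 * N) *
      ∏ i ∈ Finset.range (q + 1), (2 * N + 2 * i + 1 : ℝ)) • a N := by
  have hd : ∀ s : ℝ, 0 < s → deriv f s =
      ∑' N : ℕ, ((2 * N + (2 * q : ℕ) + 1 : ℝ) * s ^ (2 * N + 2 * q)) • a N := by
    intro s hs
    have h := hasDerivAt_tsum_pow_smul ha (2 * q) hs
    refine (h.congr_of_eventuallyEq ?_).deriv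
    filter_upwards [lt_mem_nhds hs] with y hy using hf y hy
  induction q generalizing f a with
  | zero =>
    simp [hd t ht, mul_comm]
  | succ q ih =>
    rw [Function.iterate_succ_apply]
    set b : ℕ → F := fun N => (2 * N + (2 * (q + 1) : ℕ) + 1 : ℝ) • a N with hb
    have hbs : ∀ r : ℝ, 0 ≤ r → Summable fun N => ‖b N‖ * r ^ N := by
      intro r hr
      refine Summable.of_nonneg_of_le (fun N => by positivity) (fun N => ?_)
        ((ha (3 * r) (by positivity)).mul_left (2 * (q + 1) + 1 : ℝ))
      rw [hb, norm_smul, Real.norm_of_nonneg (by positivity), mul_pow]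
      have h3 : (1 + 2 * N : ℝ) ≤ 3 ^ N := by
        have := one_add_mul_le_pow (a := (2:ℝ)) (by norm_num) N
        norm_num at this; linarith
      have h4 : (2 * N + (2 * (q + 1) : ℕ) + 1 : ℝ) ≤ (2 * (q + 1) + 1) * 3 ^ N := by
        push_cast
        have : (0:ℝ) ≤ q * (2 * N) := by positivity
        nlinarith [mul_le_mul_of_nonneg_left h3 (by positivity : (0:ℝ) ≤ 2 * (q + 1) + 1)]
      calc _ ≤ (2 * (q + 1) + 1) * 3 ^ N * ‖a N‖ * r ^ N := by gcongr
        _ = _ := by ring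
    have hD : ∀ s : ℝ, 0 < s → Dop f s = ∑' N, s ^ (2 * N + 2 * q + 1) • b N := by
      intro s hs
      rw [Dop, hd s hs, ← tsum_const_smul'']
      refine tsum_congr fun N => ?_
      rw [hb, smul_smul, smul_smul]
      congr 1
      rw [show 2 * N + 2 * (q + 1) = 2 * N + 2 * q + 1 + 1 by ring, pow_succ]
      field_simp
    rw [ih hbs hD]
    · refine tsum_congr fun N => ?_
      rw [hb, smul_smul, Finset.prod_range_succ _ (q + 1)]
      push_cast
      congr 1
      ring
    · intro s hs
      have h := hasDerivAt_tsum_pow_smul hbs (2 * q) hs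
      refine (h.congr_of_eventuallyEq ?_).deriv
      filter_upwards [lt_mem_nhds hs] with y hy using hD y hy

theorem hasSum_cfc_cos {𝒜 : Type*} [CStarAlgebra 𝒜] [PartialOrder 𝒜] [StarOrderedRing 𝒜]
    {S : 𝒜} (hS : 0 ≤ S) (t : ℝ) :
    HasSum (fun N : ℕ => ((-1) ^ N * t ^ (2 * N) / (2 * N).factorial : ℝ) • S ^ N)
      (cfc (fun x : ℝ => Real.cos (t * √x)) S) := by
  have hsa : IsSelfAdjoint S := IsSelfAdjoint.of_nonneg hS
  obtain ⟨M, hM⟩ := (ContinuousFunctionalCalculus.isCompact_spectrum (R := ℝ) S).isBounded.exists_norm_le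
  set g : ℕ → ℝ → ℝ := fun N x => (-1) ^ N * t ^ (2 * N) / (2 * N).factorial * x ^ N
  have hg : ∀ N, cfc (g N) S = ((-1) ^ N * t ^ (2 * N) / (2 * N).factorial : ℝ) • S ^ N := by
    intro N
    rw [cfc_const_mul _ (fun x : ℝ => x ^ N) S (by fun_prop), cfc_pow_id S N hsa]
  have hsum : ∀ s : Finset ℕ, cfc (fun x => ∑ N ∈ s, g N x) S =
      ∑ N ∈ s, ((-1) ^ N * t ^ (2 * N) / (2 * N).factorial : ℝ) • S ^ N := by
    intro s
    rw [← Finset.sum_congr rfl fun N _ => hg N, ← cfc_sum g S s (fun i _ => by fun_prop)]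
    congr 1; ext x; simp
  rw [HasSum]
  simp_rw [← hsum]
  refine tendsto_cfc_fun ?_ (.of_forall fun s => by fun_prop)
  have hu : Summable fun N : ℕ => (t ^ 2 * M) ^ N / N.factorial :=
    Real.summable_pow_div_factorial _
  refine (tendstoUniformlyOn_tsum hu (f := g) (s := spectrum ℝ S) ?_).congr_right ?_
  · intro N x hx
    have h2 : ((N.factorial : ℕ) : ℝ) ≤ (2 * N).factorial := by
      exact_mod_cast Nat.factorial_le (by omega)
    have hxM := hM x hx
    simp only [g, norm_mul, norm_div, norm_pow, norm_neg, norm_one, one_pow, one_mul,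
      Real.norm_eq_abs, Nat.abs_cast]
    rw [Real.norm_eq_abs] at hxM
    calc |t| ^ (2 * N) / (2 * N).factorial * |x| ^ N
        ≤ |t| ^ (2 * N) / N.factorial * M ^ N := by gcongr
      _ = _ := by rw [pow_mul, sq_abs, mul_pow]; ring
  · intro x hx
    have hx0 : 0 ≤ x := spectrum_nonneg_of_nonneg hS hx
    have := Real.hasSum_cos (t * √x)
    beta_reduce
    rw [← this.tsum_eq]
    refine tsum_congr fun N => ?_
    simp only [g]
    rw [mul_pow, pow_mul (√x), Real.sq_sqrt hx0]
    ring

section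
open PowerSeries

variable {H : Type*} [NormedAddCommGroup H] [InnerProductSpace ℂ H]

theorem cosOp_eq_seriesValue (s c : ℝ) (m : ℕ) (T : H →L[ℂ] H) :
    cosOp (s * c / √m) T = seriesValue (s ^ 2) (cosSeries (T ^ 2) (c ^ 2 / m)) := by
  rw [cosOp, seriesValue]
  refine tsum_congr fun k => ?_
  rw [cosSeries, coeff_mk, smul_smul, ← pow_mul T]
  congr 1
  rw [pow_mul, div_pow, mul_pow, sq_sqrt (Nat.cast_nonneg m), div_pow, div_pow, mul_pow]
  ring

/-- The Taylor coefficients of `(exp (z A² / m) exp (z B² / m)) ^ m`. -/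
noncomputable def trotterCoeff (A B : H →L[ℂ] H) (m N : ℕ) : H →L[ℂ] H :=
  coeff N ((expSeries (A ^ 2) (1 / m) * expSeries (B ^ 2) (1 / m)) ^ m)

theorem prod_ofFn_expSeries (A B : H →L[ℂ] H) (m : ℕ) :
    (List.ofFn fun i : Fin (2 * m) =>
      expSeries ((if (i : ℕ) % 2 = 0 then A else B) ^ 2) (1 / m)).prod =
      (expSeries (A ^ 2) (1 / m) * expSeries (B ^ 2) (1 / m)) ^ m := by
  rw [← prod_ofFn_alternate]
  congr 2
  ext1 i
  split_ifs <;> rfl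

theorem norm_trotterCoeff_le [Nontrivial H] (A B : H →L[ℂ] H) {m : ℕ} (hm : 1 ≤ m) (N : ℕ) :
    ‖trotterCoeff A B m N‖ ≤ (‖A ^ 2‖ + ‖B ^ 2‖) ^ N / N.factorial := by
  have hm0 : (m:ℝ) ≠ 0 := by exact_mod_cast (by omega : m ≠ 0)
  have ha : (0:ℝ) ≤ 1 / m := by positivity
  have h := (((expBounded_expSeries (A ^ 2) ha).mul (expBounded_expSeries (B ^ 2) ha)).pow m) N
  rwa [← mul_add, ← mul_assoc, mul_one_div_cancel hm0, one_mul] at h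

theorem abs_momentFactor_le (m N : ℕ) : |momentFactor m N| ≤ (2 * π) ^ m := by
  have hP : (1:ℝ) ≤ ∏ i ∈ Finset.range m, (2 * N + 2 * i + 1 : ℝ) :=
    calc (1:ℝ) = ∏ _i ∈ Finset.range m, 1 := by simp
      _ ≤ _ := Finset.prod_le_prod (fun _ _ => zero_le_one) fun i _ => by
        have : (0:ℝ) ≤ 2 * N + 2 * i := by positivity
        linarith
  have hf : (N.factorial : ℝ) ≤ (2 * N).factorial := by
    exact_mod_cast Nat.factorial_le (by omega)
  rw [momentFactor, abs_mul, abs_pow, abs_neg, abs_one, one_pow, one_mul,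
    abs_of_nonneg (by positivity), mul_div_assoc]
  refine mul_le_of_le_one_right (by positivity) ?_
  rw [div_le_one (by positivity)]
  exact hf.trans (le_mul_of_one_le_right (by positivity) hP)

theorem deriv_iterate_Dop_integral [CompleteSpace H] [Nontrivial H] (A B : H →L[ℂ] H) {m : ℕ}
    (hm : 1 ≤ m) {g : ℝ → (H →L[ℂ] H)}
    (hg : ∀ s : ℝ, g s = s ^ (2*m-1) •
      ∫ ω in Metric.closedBall (0 : EuclideanSpace ℝ (Fin (2*m))) 1,
        ((1 - ‖ω‖^2) ^ (-(1:ℝ)/2)) •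
          (List.ofFn (fun i : Fin (2*m) =>
            cosOp (s * ω i / √m) (if (i : ℕ) % 2 = 0 then A else B))).prod)
    {t : ℝ} (ht : 0 < t) :
    (1 / (2*π)^m) • deriv (Dop^[m-1] g) t =
      ∑' N : ℕ, ((-1) ^ N * t ^ (2 * N) * (N.factorial / (2 * N).factorial) : ℝ) •
        trotterCoeff A B m N := by
  have hg' : ∀ s : ℝ, 0 < s → g s = ∑' N : ℕ, s ^ (2 * N + 2 * (m - 1) + 1) •
      (momentFactor m N • trotterCoeff A B m N) := by
    intro s _
    rw [hg]
    simp_rw [cosOp_eq_seriesValue]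
    rw [integral_prod_seriesValue hm
      (fun i : Fin (2 * m) => (if (i : ℕ) % 2 = 0 then A else B) ^ 2) s,
      ← tsum_const_smul'']
    refine tsum_congr fun N => ?_
    rw [prod_ofFn_expSeries, trotterCoeff, smul_smul, smul_smul, ← mul_assoc, ← pow_add]
    congr 3
    omega
  have ha : ∀ r : ℝ, 0 ≤ r →
      Summable fun N => ‖momentFactor m N • trotterCoeff A B m N‖ * r ^ N := by
    intro r hr
    refine Summable.of_nonneg_of_le (fun N => by positivity) (fun N => ?_)
      ((Real.summable_pow_div_factorial ((‖A ^ 2‖ + ‖B ^ 2‖) * r)).mul_left ((2 * π) ^ m))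
    rw [norm_smul, Real.norm_eq_abs]
    calc |momentFactor m N| * ‖trotterCoeff A B m N‖ * r ^ N
        ≤ (2 * π) ^ m * ((‖A ^ 2‖ + ‖B ^ 2‖) ^ N / N.factorial) * r ^ N := by
          gcongr
          · exact abs_momentFactor_le m N
          · exact norm_trotterCoeff_le A B hm N
      _ = _ := by rw [mul_pow (‖A ^ 2‖ + ‖B ^ 2‖)]; ring
  rw [deriv_iterate_Dop (m - 1) ha hg' ht, ← tsum_const_smul'']
  refine tsum_congr fun N => ?_
  rw [smul_smul, smul_smul, Nat.sub_add_cancel hm, momentFactor]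
  congr 1
  have hP : (0:ℝ) < ∏ i ∈ Finset.range m, (2 * N + 2 * i + 1 : ℝ) :=
    Finset.prod_pos fun i _ => by positivity
  have hπ := pi_pos
  field_simp

end

theorem stmt15 {H : Type*} [NormedAddCommGroup H] [InnerProductSpace ℂ H] [CompleteSpace H]
    (A B : H →L[ℂ] H) (hA : IsSelfAdjoint A) (hB : IsSelfAdjoint B)
    (G : ℕ → ℝ → (H →L[ℂ] H))
    (hG : ∀ m : ℕ, 1 ≤ m → ∀ s : ℝ, G m s = s ^ (2*m-1) •
      ∫ ω in Metric.closedBall (0 : EuclideanSpace ℝ (Fin (2*m))) 1,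
        ((1 - ‖ω‖^2) ^ (-(1:ℝ)/2)) •
          (List.ofFn (fun i : Fin (2*m) =>
            cosOp (s * ω i / Real.sqrt m) (if (i : ℕ) % 2 = 0 then A else B))).prod)
    (F : ℕ → ℝ → (H →L[ℂ] H))
    (hF : ∀ m : ℕ, 1 ≤ m → ∀ t : ℝ,
      F m t = (1 / (2*π)^m) • deriv (Dop^[m-1] (G m)) t) :
    ∀ a b : ℝ, 0 < a → a ≤ b →
      TendstoUniformlyOn (fun m t => F m t)
        (fun t => cfc (fun x : ℝ => Real.cos (t * Real.sqrt x)) (A^2 + B^2))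
        atTop (Set.Icc a b) := by
  intro a b ha _
  rw [Metric.tendstoUniformlyOn_iff]
  intro ε hε
  rcases subsingleton_or_nontrivial H with hH | hH
  · refine .of_forall fun m t _ => ?_
    rwa [Subsingleton.elim (F m t) (cfc (fun x : ℝ => Real.cos (t * Real.sqrt x)) (A^2 + B^2)),
      dist_self]
  have hS : 0 ≤ A ^ 2 + B ^ 2 := add_nonneg hA.sq_nonneg hB.sq_nonneg
  set ρ := ‖A ^ 2‖ + ‖B ^ 2‖ with hρ
  set c : ℕ → ℝ := fun N => b ^ (2 * N) * (2 * N ^ 2 * (ρ ^ N / (2 * N).factorial)) with hc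
  have hcs : Summable c := by
    refine Summable.of_nonneg_of_le (fun N => ?_) (fun N => ?_)
      ((Real.summable_pow_div_factorial (b ^ 2 * (4 * ρ))).mul_left 2)
    · have : 0 ≤ b ^ (2 * N) := by rw [pow_mul]; positivity
      positivity
    · have h1 : (N.factorial : ℝ) ≤ (2 * N).factorial := by
        exact_mod_cast Nat.factorial_le (by omega)
      have h2 : (N:ℝ) ≤ 2 ^ N := by exact_mod_cast Nat.lt_two_pow_self.le
      have h3 : (N:ℝ) ^ 2 ≤ 4 ^ N := by
        calc (N:ℝ) ^ 2 ≤ (2 ^ N) ^ 2 := by gcongr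
          _ = 4 ^ N := by rw [← pow_mul, mul_comm, pow_mul]; norm_num
      simp only [hc]
      rw [pow_mul]
      calc (b ^ 2) ^ N * (2 * N ^ 2 * (ρ ^ N / (2 * N).factorial))
          ≤ (b ^ 2) ^ N * (2 * 4 ^ N * (ρ ^ N / N.factorial)) := by gcongr
        _ = _ := by rw [mul_pow, mul_pow]; ring
  have hlim := tendsto_const_div_atTop_nhds_zero_nat (∑' N, c N)
  filter_upwards [hlim.eventually_lt_const hε, eventually_ge_atTop 1] with m hmε hm t ht
  refine lt_of_le_of_lt ?_ hmε
  have ht0 : 0 < t := ha.trans_le ht.1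
  have hcfc := hasSum_cfc_cos hS t
  have hT : Summable fun N : ℕ =>
      ((-1) ^ N * t ^ (2 * N) * (N.factorial / (2 * N).factorial) : ℝ) •
        trotterCoeff A B m N := by
    refine Summable.of_norm_bounded (Real.summable_pow_div_factorial (t ^ 2 * ρ)) fun N => ?_
    have h1 : (N.factorial / (2 * N).factorial : ℝ) ≤ 1 := by
      rw [div_le_one (by positivity)]
      exact_mod_cast Nat.factorial_le (by omega)
    rw [norm_smul]
    simp only [norm_mul, norm_pow, norm_neg, norm_one, one_pow, one_mul]
    rw [Real.norm_of_nonneg ht0.le, Real.norm_of_nonneg (by positivity)]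
    calc _ ≤ t ^ (2 * N) * 1 * (ρ ^ N / N.factorial) := by
          gcongr
          exact norm_trotterCoeff_le A B hm N
      _ = _ := by rw [pow_mul, mul_pow]; ring
  have hsum := hT.hasSum.sub hcfc
  rw [dist_comm, dist_eq_norm, hF m hm t, deriv_iterate_Dop_integral A B hm (hG m hm) ht0,
    ← hsum.tsum_eq, div_eq_mul_one_div]
  refine tsum_of_norm_bounded (hcs.hasSum.mul_right (1 / (m:ℝ))) fun N => ?_
  have key := norm_coeff_trotter_sub_le (A ^ 2) (B ^ 2) hm N
  rw [← trotterCoeff, ← hρ] at key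
  have e : ((-1) ^ N * t ^ (2 * N) * (N.factorial / (2 * N).factorial) : ℝ) • trotterCoeff A B m N -
      ((-1) ^ N * t ^ (2 * N) / (2 * N).factorial : ℝ) • (A ^ 2 + B ^ 2) ^ N =
      ((-1) ^ N * t ^ (2 * N) * (N.factorial / (2 * N).factorial) : ℝ) •
        (trotterCoeff A B m N - (1 / N.factorial : ℝ) • (A ^ 2 + B ^ 2) ^ N) := by
    rw [smul_sub, smul_smul]
    congr 2
    field_simp
  rw [e, norm_smul]
  simp only [norm_mul, norm_pow, norm_neg, norm_one, one_pow, one_mul]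
  rw [Real.norm_of_nonneg ht0.le, Real.norm_of_nonneg (by positivity)]
  have htb : t ≤ b := ht.2
  have hb : 0 < b := ht0.trans_le htb
  calc _ ≤ b ^ (2 * N) * (N.factorial / (2 * N).factorial) *
        ((1 / m) * (2 * N ^ 2 * (ρ ^ N / N.factorial))) := by gcongr
    _ = _ := by rw [hc]; field_simp
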